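/- Strong completeness of ELDF: for every formula φ and every set Φ of formulas of the language ELDF, if Φ semantically entails φ over similarity models (every pointed similarity model satisfying all formulas of Φ satisfies φ), then Φ ⊢_ELDF φ (i.e., there is a finite subset {ψ_1,…,ψ_n} ⊆ Φ such that (ψ_1 ∧ … ∧ ψ_n) → φ is a theorem of ELDF). -/

import Mathlib

/-- Formulas of the language ELDF over a set `Ag` of agents, with
propositional variables drawn from the countably infinite set `ℕ`.  Groups
are nonempty finite sets of agents. -/
inductive Formula (Ag : Type) : Type
  | atom : ℕ → Formula Ag
  | neg  : Formula Ag → Formula Ag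
  | impl : Formula Ag → Formula Ag → Formula Ag
  | K    : Ag → Formula Ag → Formula Ag
  | D    : (G : Finset Ag) → G.Nonempty → Formula Ag → Formula Ag
  | F    : (G : Finset Ag) → G.Nonempty → Formula Ag → Formula Ag

/-- A similarity model `(W, A, E, C, ν)`. -/
structure SimModel (Ag : Type) where
  W : Type
  A : Type
  w_nonempty : Nonempty W
  E : W → W → Set A
  Cap : Ag → Set A
  val : W → Set ℕ
  positivity : ∀ s t : W, E s t = Set.univ → s = t
  symmetry : ∀ s t : W, E s t = E t s

/-- Satisfaction on similarity models. -/
def SimModel.sat {Ag : Type} (M : SimModel Ag) : M.W → Formula Ag → Prop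
  | s, .atom p => p ∈ M.val s
  | s, .neg φ => ¬ M.sat s φ
  | s, .impl φ ψ => M.sat s φ → M.sat s ψ
  | s, .K a φ => ∀ t, M.Cap a ⊆ M.E s t → M.sat t φ
  | s, .D G _ φ => ∀ t, (⋃ a ∈ G, M.Cap a) ⊆ M.E s t → M.sat t φ
  | s, .F G _ φ => ∀ t, (⋂ a ∈ G, M.Cap a) ⊆ M.E s t → M.sat t φ

namespace Formula
/-- Conjunction, defined from the primitive connectives. -/
def and {Ag : Type} (φ ψ : Formula Ag) : Formula Ag := .neg (φ.impl ψ.neg)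
/-- A fixed tautology. -/
def top {Ag : Type} : Formula Ag := (atom 0).impl (atom 0)
/-- Biconditional, defined from the primitive connectives. -/
def iff {Ag : Type} (φ ψ : Formula Ag) : Formula Ag := (φ.impl ψ).and (ψ.impl φ)
end Formula

/-- `φ` is a propositional tautology: it evaluates to `true` under every
assignment of truth values to formulas that respects negation and implication
(thereby treating atoms and modal formulas as propositional atoms). -/
def IsTautology {Ag : Type} (φ : Formula Ag) : Prop :=
  ∀ v : Formula Ag → Bool,
    (∀ ψ : Formula Ag, v ψ.neg = !v ψ) →
    (∀ ψ χ : Formula Ag, v (ψ.impl χ) = (!v ψ || v χ)) →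
    v φ = true

/-- The axiomatic system ELDF: the least set of formulas containing all propositional tautologies, closed under modus ponens, necessitation for each `K_a` and the rule NF, and containing the axiom schemes K, B, KD, D1, D2, BD, KF, F1, F2 and BF. -/
inductive Prov {Ag : Type} : Formula Ag → Prop
  | taut {φ : Formula Ag} : IsTautology φ → Prov φ
  | mp {φ ψ : Formula Ag} : Prov (φ.impl ψ) → Prov φ → Prov ψ
  | nec {φ : Formula Ag} (a : Ag) : Prov φ → Prov (.K a φ)
  | kK {φ ψ : Formula Ag} (a : Ag) :
      Prov ((Formula.K a (φ.impl ψ)).impl ((Formula.K a φ).impl (.K a ψ)))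
  | axB {φ : Formula Ag} (a : Ag) :
      Prov (φ.impl (.K a (Formula.neg (.K a φ.neg))))
  | kD {φ ψ : Formula Ag} (G : Finset Ag) (hG : G.Nonempty) :
      Prov ((Formula.D G hG (φ.impl ψ)).impl ((Formula.D G hG φ).impl (.D G hG ψ)))
  | d1 {φ : Formula Ag} (a : Ag) :
      Prov ((Formula.D {a} (Finset.singleton_nonempty a) φ).iff (.K a φ))
  | d2 {φ : Formula Ag} (G H : Finset Ag) (hG : G.Nonempty) (hH : H.Nonempty)
      (hGH : G ⊆ H) : Prov ((Formula.D G hG φ).impl (.D H hH φ))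
  | bd {φ : Formula Ag} (G : Finset Ag) (hG : G.Nonempty) :
      Prov (φ.impl (.D G hG (Formula.neg (.D G hG φ.neg))))
  | kF {φ ψ : Formula Ag} (G : Finset Ag) (hG : G.Nonempty) :
      Prov ((Formula.F G hG (φ.impl ψ)).impl ((Formula.F G hG φ).impl (.F G hG ψ)))
  | f1 {φ : Formula Ag} (a : Ag) :
      Prov ((Formula.F {a} (Finset.singleton_nonempty a) φ).iff (.K a φ))
  | f2 {φ : Formula Ag} (G H : Finset Ag) (hG : G.Nonempty) (hH : H.Nonempty)
      (hHG : H ⊆ G) : Prov ((Formula.F G hG φ).impl (.F H hH φ))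
  | bf {φ : Formula Ag} (G : Finset Ag) (hG : G.Nonempty) :
      Prov (φ.impl (.F G hG (Formula.neg (.F G hG φ.neg))))
  | nf {φ : Formula Ag} (G : Finset Ag) (hG : G.Nonempty) :
      Prov φ → Prov (.F G hG φ)

namespace ELDFProof

open Formula

variable {Ag : Type}

theorem v_and (v : Formula Ag → Bool) (h1 : ∀ ψ : Formula Ag, v ψ.neg = !v ψ)
    (h2 : ∀ ψ χ : Formula Ag, v (ψ.impl χ) = (!v ψ || v χ)) (φ ψ : Formula Ag) :
    v (φ.and ψ) = (v φ && v ψ) := by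
  simp only [Formula.and, h1, h2]
  cases v φ <;> cases v ψ <;> rfl

theorem v_fold (v : Formula Ag → Bool) (h1 : ∀ ψ : Formula Ag, v ψ.neg = !v ψ)
    (h2 : ∀ ψ χ : Formula Ag, v (ψ.impl χ) = (!v ψ || v χ)) (L : List (Formula Ag)) :
    v (L.foldr Formula.and Formula.top) = true ↔ ∀ ψ ∈ L, v ψ = true := by
  induction L with
  | nil => simp [Formula.top, h2]
  | cons a L ih => simp [v_and v h1 h2, ih]

theorem p_trans {φ ψ χ : Formula Ag} (h : Prov (φ.impl ψ)) (h' : Prov (ψ.impl χ)) :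
    Prov (φ.impl χ) := by
  refine Prov.mp (Prov.mp (Prov.taut (φ := (φ.impl ψ).impl ((ψ.impl χ).impl (φ.impl χ))) ?_) h) h'
  intro v h1 h2
  simp only [h2]
  cases v φ <;> cases v ψ <;> cases v χ <;> rfl

theorem p_iff1 {φ ψ : Formula Ag} (h : Prov (φ.iff ψ)) : Prov (φ.impl ψ) := by
  refine Prov.mp (Prov.taut ?_) h
  intro v h1 h2
  simp only [Formula.iff, v_and v h1 h2, h2]
  cases v φ <;> cases v ψ <;> rfl

theorem p_iff2 {φ ψ : Formula Ag} (h : Prov (φ.iff ψ)) : Prov (ψ.impl φ) := by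
  refine Prov.mp (Prov.taut ?_) h
  intro v h1 h2
  simp only [Formula.iff, v_and v h1 h2, h2]
  cases v φ <;> cases v ψ <;> rfl

/-- Derivability from hypotheses. -/
inductive Der (Φ : Set (Formula Ag)) : Formula Ag → Prop
  | prov {φ : Formula Ag} : Prov φ → Der Φ φ
  | hyp {φ : Formula Ag} : φ ∈ Φ → Der Φ φ
  | mp {φ ψ : Formula Ag} : Der Φ (φ.impl ψ) → Der Φ φ → Der Φ ψ

theorem Der.toList {Φ : Set (Formula Ag)} {φ : Formula Ag} (h : Der Φ φ) :
    ∃ L : List (Formula Ag), (∀ ψ ∈ L, ψ ∈ Φ) ∧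
      Prov ((L.foldr Formula.and Formula.top).impl φ) := by
  induction h with
  | @prov φ h =>
    refine ⟨[], by simp, Prov.mp (Prov.taut ?_) h⟩
    intro v h1 h2
    simp only [h2]
    cases v φ <;> simp
  | @hyp φ h =>
    refine ⟨[φ], by simpa using h, Prov.taut ?_⟩
    intro v h1 h2
    have := v_fold v h1 h2 [φ]
    rw [h2]
    cases h3 : v φ <;> simp_all
  | @mp φ ψ _ _ ih1 ih2 =>
    obtain ⟨L1, hL1, p1⟩ := ih1
    obtain ⟨L2, hL2, p2⟩ := ih2
    refine ⟨L1 ++ L2, ?_, Prov.mp (Prov.mp (Prov.taut ?_) p1) p2⟩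
    · intro χ hχ
      rcases List.mem_append.1 hχ with h | h
      · exact hL1 _ h
      · exact hL2 _ h
    · intro v h1 h2
      have e1 := v_fold v h1 h2 L1
      have e2 := v_fold v h1 h2 L2
      have e3 := v_fold v h1 h2 (L1 ++ L2)
      have e4 : v ((L1 ++ L2).foldr Formula.and Formula.top)
          = (v (L1.foldr Formula.and Formula.top) && v (L2.foldr Formula.and Formula.top)) := by
        rw [Bool.eq_iff_iff, Bool.and_eq_true, e1, e2, e3]
        constructor
        · intro h
          exact ⟨fun x hx => h x (List.mem_append_left _ hx),
            fun x hx => h x (List.mem_append_right _ hx)⟩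
        · rintro ⟨ha, hb⟩ x hx
          rcases List.mem_append.1 hx with h | h
          · exact ha _ h
          · exact hb _ h
      simp only [h2, e4]
      cases v (L1.foldr Formula.and Formula.top) <;>
        cases v (L2.foldr Formula.and Formula.top) <;> cases v φ <;> cases v ψ <;> rfl

theorem Der.mono {Φ Ψ : Set (Formula Ag)} (hs : Φ ⊆ Ψ) {φ : Formula Ag} (h : Der Φ φ) :
    Der Ψ φ := by
  induction h with
  | prov h => exact .prov h
  | hyp h => exact .hyp (hs h)
  | mp _ _ a b => exact .mp a b

theorem Der.ded {Φ : Set (Formula Ag)} {ψ φ : Formula Ag} (h : Der (insert ψ Φ) φ) :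
    Der Φ (ψ.impl φ) := by
  have wk : ∀ χ : Formula Ag, Der Φ χ → Der Φ (ψ.impl χ) := by
    intro χ hχ
    refine .mp (.prov (Prov.taut ?_)) hχ
    intro v h1 h2
    simp only [h2]
    cases v χ <;> cases v ψ <;> rfl
  induction h with
  | prov h => exact wk _ (.prov h)
  | hyp h =>
    rcases h with rfl | h
    · refine .prov (Prov.taut ?_)
      intro v h1 h2
      simp [h2]
    · exact wk _ (.hyp h)
  | @mp α β _ _ a b =>
    refine .mp (.mp (.prov (Prov.taut ?_)) a) b
    intro v h1 h2
    simp only [h2]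
    cases v α <;> cases v β <;> cases v ψ <;> rfl

theorem Der.chain {c : Set (Set (Formula Ag))} (hc : IsChain (· ⊆ ·) c) (hne : c.Nonempty)
    {φ : Formula Ag} (h : Der (⋃₀ c) φ) : ∃ Ψ ∈ c, Der Ψ φ := by
  induction h with
  | prov h => exact ⟨_, hne.some_mem, .prov h⟩
  | hyp h =>
    obtain ⟨Ψ, h1, h2⟩ := h
    exact ⟨Ψ, h1, .hyp h2⟩
  | mp _ _ a b =>
    obtain ⟨Ψ, h1, h2⟩ := a
    obtain ⟨Ψ', h1', h2'⟩ := b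
    rcases hc.total h1 h1' with hh | hh
    · exact ⟨_, h1', .mp (h2.mono hh) h2'⟩
    · exact ⟨_, h1, .mp h2 (h2'.mono hh)⟩

/-- Maximal consistent sets. -/
structure MCS (Ag : Type) where
  S : Set (Formula Ag)
  prov : ∀ {φ}, Prov φ → φ ∈ S
  mp : ∀ {φ ψ : Formula Ag}, φ.impl ψ ∈ S → φ ∈ S → ψ ∈ S
  neg : ∀ φ : Formula Ag, φ.neg ∈ S ↔ φ ∉ S

theorem lindenbaum {Φ : Set (Formula Ag)} {φ : Formula Ag} (h : ¬ Der Φ φ) :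
    ∃ Γ : MCS Ag, Φ ⊆ Γ.S ∧ φ ∉ Γ.S := by
  obtain ⟨M, hM, hmax⟩ := zorn_subset_nonempty {Ψ : Set (Formula Ag) | ¬ Der Ψ φ}
    (by
      intro c hc hch hne
      refine ⟨⋃₀ c, ?_, fun s hs => Set.subset_sUnion_of_mem hs⟩
      intro hd
      obtain ⟨Ψ, h1, h2⟩ := hd.chain hch hne
      exact hc h1 h2) Φ h
  have hcon : ¬ Der M φ := hmax.1
  have ins : ∀ ψ, ψ ∉ M → Der M (ψ.impl φ) := by
    intro ψ hψ
    by_contra hn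
    have : ¬ Der (insert ψ M) φ := fun hd => hn hd.ded
    exact hψ (hmax.2 this (Set.subset_insert _ _) (Set.mem_insert _ _))
  have cl : ∀ ψ, Der M ψ → ψ ∈ M := by
    intro ψ hd
    by_contra hn
    exact hcon (.mp (ins ψ hn) hd)
  refine ⟨⟨M, fun hp => cl _ (.prov hp), fun h1 h2 => cl _ (.mp (.hyp h1) (.hyp h2)), ?_⟩, hM,
    fun hφ => hcon (.hyp hφ)⟩
  intro ψ
  constructor
  · intro h1 h2
    refine hcon (.mp (.mp (.prov (Prov.taut ?_)) (.hyp h1)) (.hyp h2))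
    intro v e1 e2
    simp only [e1, e2]
    cases v ψ <;> simp
  · intro h1
    by_contra h2
    refine hcon (.mp (.mp (.prov (Prov.taut ?_)) (ins _ h1)) (ins _ h2))
    intro v e1 e2
    simp only [e1, e2]
    cases v ψ <;> cases v φ <;> rfl

theorem MCS.impl_iff (Γ : MCS Ag) (φ ψ : Formula Ag) :
    φ.impl ψ ∈ Γ.S ↔ (φ ∈ Γ.S → ψ ∈ Γ.S) := by
  constructor
  · exact fun h h' => Γ.mp h h'
  · intro h
    by_cases hφ : φ ∈ Γ.S
    · refine Γ.mp (Γ.prov (Prov.taut ?_)) (h hφ)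
      intro v e1 e2
      simp only [e2]
      cases v ψ <;> cases v φ <;> rfl
    · refine Γ.mp (Γ.prov (Prov.taut ?_)) ((Γ.neg φ).2 hφ)
      intro v e1 e2
      simp only [e1, e2]
      cases v ψ <;> cases v φ <;> rfl

/-- Modality labels. -/
inductive Lab (Ag : Type) : Type
  | dl : (G : Finset Ag) → G.Nonempty → Lab Ag
  | fl : (G : Finset Ag) → G.Nonempty → Lab Ag

/-- The box of a label. -/
def box : Lab Ag → Formula Ag → Formula Ag
  | .dl G h, φ => .D G h φ
  | .fl G h, φ => .F G h φ

/-- The set of abilities of a label. -/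
def Em : Lab Ag → Set (Finset Ag)
  | .dl G _ => {X | ∃ a ∈ G, a ∈ X}
  | .fl G _ => {X | G ⊆ X}

theorem Em_nonempty (m : Lab Ag) : (Em m).Nonempty := by
  cases m with
  | dl G h => exact ⟨G, h.choose, h.choose_spec, h.choose_spec⟩
  | fl G h => exact ⟨G, Finset.Subset.refl G⟩

theorem box_nec (m : Lab Ag) {φ : Formula Ag} (h : Prov φ) : Prov (box m φ) := by
  cases m with
  | dl G hG =>
    obtain ⟨a, ha⟩ := id hG
    exact .mp (.d2 {a} G _ hG (by simpa using ha)) (.mp (p_iff2 (.d1 a)) (.nec a h))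
  | fl G hG => exact .nf G hG h

theorem box_k (m : Lab Ag) (φ ψ : Formula Ag) :
    Prov ((box m (φ.impl ψ)).impl ((box m φ).impl (box m ψ))) := by
  cases m with
  | dl G hG => exact .kD G hG
  | fl G hG => exact .kF G hG

theorem box_b (m : Lab Ag) (φ : Formula Ag) :
    Prov (φ.impl (box m (Formula.neg (box m φ.neg)))) := by
  cases m with
  | dl G hG => exact .bd G hG
  | fl G hG => exact .bf G hG

theorem box_mono (m m' : Lab Ag) (hm : Em m ⊆ Em m') (φ : Formula Ag) :
    Prov ((box m φ).impl (box m' φ)) := by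
  cases m with
  | dl H hH =>
    cases m' with
    | dl G hG =>
      refine .d2 H G hH hG ?_
      intro a ha
      obtain ⟨b, hb, hb'⟩ := hm (show ({a} : Finset Ag) ∈ _ from ⟨a, ha, by simp⟩)
      rw [Finset.mem_singleton] at hb'
      exact hb' ▸ hb
    | fl G hG =>
      have key : ∀ a ∈ H, G ⊆ {a} := fun a ha =>
        hm (show ({a} : Finset Ag) ∈ _ from ⟨a, ha, by simp⟩)
      obtain ⟨g, hg⟩ := id hG
      have hHg : ∀ a ∈ H, a = g := fun a ha => (Finset.mem_singleton.1 (key a ha hg)).symm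
      obtain ⟨a, ha⟩ := id hH
      have hag := hHg a ha
      subst hag
      have e2 : G ⊆ {a} := key a ha
      refine p_trans (.d2 H {a} hH (Finset.singleton_nonempty a) ?_)
        (p_trans (p_iff1 (.d1 a)) (p_trans (p_iff2 (.f1 a))
          (.f2 {a} G (Finset.singleton_nonempty a) hG e2)))
      intro b hb
      simpa using hHg b hb
  | fl H hH =>
    cases m' with
    | dl G hG =>
      obtain ⟨a, ha, ha'⟩ := hm (show H ∈ _ from Finset.Subset.refl H)
      exact p_trans (.f2 H {a} hH (Finset.singleton_nonempty a) (by simpa using ha'))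
        (p_trans (p_iff1 (.f1 a)) (p_trans (p_iff2 (.d1 a))
          (.d2 {a} G (Finset.singleton_nonempty a) hG (by simpa using ha))))
    | fl G hG =>
      exact .f2 H G hH hG (hm (show H ∈ _ from Finset.Subset.refl H))

/-- Canonical relations. -/
def R (m : Lab Ag) (Γ Δ : MCS Ag) : Prop := ∀ φ, box m φ ∈ Γ.S → φ ∈ Δ.S

theorem R_symm {m : Lab Ag} {Γ Δ : MCS Ag} (h : R m Γ Δ) : R m Δ Γ := by
  intro φ hφ
  by_contra hn
  have h1 := h _ (Γ.mp (Γ.prov (box_b m φ.neg)) ((Γ.neg φ).2 hn))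
  rw [Δ.neg] at h1
  refine h1 (Δ.mp (Δ.mp (Δ.prov (box_k m _ _)) (Δ.prov (box_nec m (Prov.taut ?_)))) hφ)
  intro v e1 e2
  simp only [e1, e2]
  cases v φ <;> rfl

theorem R_exists {m : Lab Ag} {Γ : MCS Ag} {φ : Formula Ag} (h : box m φ ∉ Γ.S) :
    ∃ Δ, R m Γ Δ ∧ φ ∉ Δ.S := by
  have : ¬ Der {ψ | box m ψ ∈ Γ.S} φ := by
    intro hd
    apply h
    clear h
    induction hd with
    | prov hp => exact Γ.prov (box_nec m hp)
    | hyp hh => exact hh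
    | mp _ _ a b => exact Γ.mp (Γ.mp (Γ.prov (box_k m _ _)) a) b
  obtain ⟨Δ, h1, h2⟩ := lindenbaum this
  exact ⟨Δ, fun ψ hψ => h1 hψ, h2⟩

/-- States of the unravelled model. -/
inductive St (Ag : Type) : Type
  | root : MCS Ag → St Ag
  | step : St Ag → Lab Ag → MCS Ag → St Ag

/-- The maximal consistent set at a state. -/
def St.last : St Ag → MCS Ag
  | .root Γ => Γ
  | .step _ _ Γ => Γ

/-- Labelled edges from a state to its children. -/
def Ch (m : Lab Ag) (s t : St Ag) : Prop := ∃ Δ, t = .step s m Δ ∧ R m s.last Δ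

/-- Labelled edges. -/
def Ed (m : Lab Ag) (s t : St Ag) : Prop := Ch m s t ∨ Ch m t s

theorem Ed_R {m : Lab Ag} {s t : St Ag} (h : Ed m s t) : R m s.last t.last := by
  rcases h with ⟨Δ, rfl, h⟩ | ⟨Δ, rfl, h⟩
  · exact h
  · exact R_symm h

theorem Ed_unique {m m' : Lab Ag} {s t : St Ag} (h : Ed m s t) (h' : Ed m' s t) : m = m' := by
  rcases h with ⟨Δ, h, _⟩ | ⟨Δ, h, _⟩ <;> rcases h' with ⟨Δ', h', _⟩ | ⟨Δ', h', _⟩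
  · rw [h] at h'
    injection h'
  · have e1 := congrArg sizeOf h
    have e2 := congrArg sizeOf h'
    simp at e1 e2
    omega
  · have e1 := congrArg sizeOf h
    have e2 := congrArg sizeOf h'
    simp at e1 e2
    omega
  · rw [h] at h'
    injection h'

/-- The model. -/
def model (Γ : MCS Ag) : SimModel Ag where
  W := St Ag
  A := Option (Finset Ag)
  w_nonempty := ⟨.root Γ⟩
  E s t := {x | ∃ m X, x = some X ∧ Ed m s t ∧ X ∈ Em m}
  Cap a := {x | ∃ X, x = some X ∧ a ∈ X}
  val s := {p | Formula.atom p ∈ s.last.S}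
  positivity s t h := by
    have : (none : Option (Finset Ag)) ∈ (Set.univ : Set (Option (Finset Ag))) := trivial
    rw [← h] at this
    obtain ⟨m, X, h, _⟩ := this
    cases h
  symmetry s t := by
    have : ∀ m, Ed m s t ↔ Ed m t s := fun m => or_comm
    simp only [this]

/-- The inclusion of abilities along a label. -/
def Rel (m : Lab Ag) (s t : St Ag) : Prop := ∀ X ∈ Em m, ∃ m', Ed m' s t ∧ X ∈ Em m'

theorem Rel_R {m : Lab Ag} {s t : St Ag} (h : Rel m s t) : R m s.last t.last := by
  obtain ⟨X, hX⟩ := Em_nonempty m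
  obtain ⟨m', hm', _⟩ := h X hX
  have hs : Em m ⊆ Em m' := by
    intro Y hY
    obtain ⟨m'', h1, h2⟩ := h Y hY
    rwa [Ed_unique hm' h1]
  intro φ hφ
  exact Ed_R hm' φ (s.last.mp (s.last.prov (box_mono m m' hs φ)) hφ)

theorem box_truth (m : Lab Ag) (φ : Formula Ag) (s : St Ag) :
    (∀ t, Rel m s t → φ ∈ t.last.S) ↔ box m φ ∈ s.last.S := by
  constructor
  · intro h
    by_contra hn
    obtain ⟨Δ, h1, h2⟩ := R_exists hn
    exact h2 (h (.step s m Δ) (fun X hX => ⟨m, Or.inl ⟨Δ, rfl, h1⟩, hX⟩))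
  · exact fun h t ht => Rel_R ht φ h

theorem relD (Γ : MCS Ag) (G : Finset Ag) (hG : G.Nonempty) (s t : St Ag) :
    (⋃ a ∈ G, (model Γ).Cap a) ⊆ (model Γ).E s t ↔ Rel (.dl G hG) s t := by
  constructor
  · rintro h X ⟨a, ha, haX⟩
    obtain ⟨m, Y, hY, h1, h2⟩ := h (Set.mem_biUnion ha (⟨X, rfl, haX⟩ : some X ∈ (model Γ).Cap a))
    cases hY
    exact ⟨m, h1, h2⟩
  · intro h x hx
    obtain ⟨a, ha, X, rfl, hX⟩ := Set.mem_iUnion₂.1 hx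
    obtain ⟨m, h1, h2⟩ := h X ⟨a, ha, hX⟩
    exact ⟨m, X, rfl, h1, h2⟩

theorem relF (Γ : MCS Ag) (G : Finset Ag) (hG : G.Nonempty) (s t : St Ag) :
    (⋂ a ∈ G, (model Γ).Cap a) ⊆ (model Γ).E s t ↔ Rel (.fl G hG) s t := by
  constructor
  · intro h X hX
    have : (some X : Option (Finset Ag)) ∈ ⋂ a ∈ G, (model Γ).Cap a :=
      Set.mem_iInter₂.2 fun a ha => ⟨X, rfl, hX ha⟩
    obtain ⟨m, Y, hY, h1, h2⟩ := h this
    cases hY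
    exact ⟨m, h1, h2⟩
  · intro h x hx
    have hx' := Set.mem_iInter₂.1 hx
    obtain ⟨a, ha⟩ := id hG
    obtain ⟨X, rfl, _⟩ := hx' a ha
    obtain ⟨m, h1, h2⟩ := h X (fun b hb => by
      obtain ⟨Y, hY, hb'⟩ := hx' b hb
      cases hY
      exact hb')
    exact ⟨m, X, rfl, h1, h2⟩

theorem truth (Γ : MCS Ag) (φ : Formula Ag) :
    ∀ s : St Ag, (model Γ).sat s φ ↔ φ ∈ s.last.S := by
  induction φ with
  | atom p => exact fun s => Iff.rfl
  | neg φ ih =>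
    intro s
    rw [MCS.neg, ← ih s]
    exact Iff.rfl
  | impl φ ψ ih1 ih2 =>
    intro s
    rw [MCS.impl_iff, ← ih1 s, ← ih2 s]
    exact Iff.rfl
  | K a φ ih =>
    intro s
    have h1 : Formula.K a φ ∈ s.last.S ↔ box (.dl {a} (Finset.singleton_nonempty a)) φ ∈ s.last.S :=
      ⟨s.last.mp (s.last.prov (p_iff2 (.d1 a))), s.last.mp (s.last.prov (p_iff1 (.d1 a)))⟩
    rw [h1, ← box_truth]
    refine forall_congr' fun t => ?_
    have h2 : (⋃ b ∈ ({a} : Finset Ag), (model Γ).Cap b) = (model Γ).Cap a := by simp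
    have h3 := relD Γ {a} (Finset.singleton_nonempty a) s t
    rw [h2] at h3
    exact imp_congr h3 (ih t)
  | D G hG φ ih =>
    intro s
    refine Iff.trans ?_ (box_truth (.dl G hG) φ s)
    refine forall_congr' fun t => ?_
    exact imp_congr (relD Γ G hG s t) (ih t)
  | F G hG φ ih =>
    intro s
    refine Iff.trans ?_ (box_truth (.fl G hG) φ s)
    refine forall_congr' fun t => ?_
    exact imp_congr (relF Γ G hG s t) (ih t)

end ELDFProof

/-- strong completeness of ELDF: if `Φ` semantically entails
`φ` over similarity models, then some finite conjunction `ψ₁ ∧ … ∧ ψₙ` of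
members of `Φ` is such that `(ψ₁ ∧ … ∧ ψₙ) → φ` is a theorem of ELDF. -/
theorem stmt_18 {Ag : Type} [Fintype Ag] [Nonempty Ag]
    (Φ : Set (Formula Ag)) (φ : Formula Ag)
    (h : ∀ (M : SimModel Ag) (s : M.W), (∀ ψ ∈ Φ, M.sat s ψ) → M.sat s φ) :
    ∃ L : List (Formula Ag), (∀ ψ ∈ L, ψ ∈ Φ) ∧
      Prov ((L.foldr Formula.and Formula.top).impl φ) := by
  by_contra hn
  have hd : ¬ ELDFProof.Der Φ φ := fun hd => hn hd.toList
  obtain ⟨Γ, h1, h2⟩ := ELDFProof.lindenbaum hd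
  apply h2
  have := h (ELDFProof.model Γ) (ELDFProof.St.root Γ)
    (fun ψ hψ => (ELDFProof.truth Γ ψ (.root Γ)).2 (h1 hψ))
  exact (ELDFProof.truth Γ φ (.root Γ)).1 this
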